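/- Each of the eight subspaces V_id, V_r, V_l, V_d, V_[S], V_{S}, V_[A], V_{A} of M_d ⊗ M_d is invariant under the two-copy representation: φ⊗²(U)W ⊆ W for every U ∈ 𝒩_q and each such subspace W. -/

import Mathlib

open Matrix MeasureTheory
open scoped Kronecker

noncomputable section

namespace CliffordPaper

/-- The single-qubit Pauli matrices `1, X, Y, Z`. -/
def pauli1 : Fin 4 → Matrix (Fin 2) (Fin 2) ℂ :=
  ![1, !![0, 1; 1, 0], !![0, -Complex.I; Complex.I, 0], !![1, 0; 0, -1]]

/-- Index type for the computational basis of `q` qubits. -/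
abbrev Idx (q : ℕ) := Fin q → Fin 2

/-- The space `M_d` of `d × d` complex matrices, `d = 2^q`. -/
abbrev Mat (q : ℕ) := Matrix (Idx q) (Idx q) ℂ

/-- The space `M_d ⊗ M_d`, realized as matrices indexed by the product index set
(the tensor factors combine via the Kronecker product `⊗ₖ`). -/
abbrev BMat (q : ℕ) := Matrix (Idx q × Idx q) (Idx q × Idx q) ℂ

/-- The `q`-fold Kronecker product of single-qubit Paulis with labels `a`. -/
def PauliOp {q : ℕ} (a : Fin q → Fin 4) : Mat q :=
  Matrix.of fun x y => ∏ i, pauli1 (a i) (x i) (y i)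

/-- `√d` as a complex number, where `d = 2^q`. -/
def sqrtd (q : ℕ) : ℂ := (Real.sqrt (2 ^ q) : ℝ)

/-- The set `σ̂_q` of normalized Pauli operators. -/
def sigmaHat (q : ℕ) : Set (Mat q) :=
  {M | ∃ a : Fin q → Fin 4, M = (sqrtd q)⁻¹ • PauliOp a}

/-- The normalized identity `σ₀ = 1/√d`. -/
def sigma0 (q : ℕ) : Mat q := (sqrtd q)⁻¹ • (1 : Mat q)

/-- `σ_q = σ̂_q \ {σ₀}`. -/
def sigmaSet (q : ℕ) : Set (Mat q) := sigmaHat q \ {sigma0 q}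

/-- `N_τ`: the normalized nonidentity Paulis anticommuting with `τ`. -/
def NSet {q : ℕ} (τ : Mat q) : Set (Mat q) :=
  {σ | σ ∈ sigmaSet q ∧ σ * τ + τ * σ = 0}

/-- `C_τ`: the normalized nonidentity Paulis distinct from `τ` commuting with `τ`. -/
def CSet {q : ℕ} (τ : Mat q) : Set (Mat q) :=
  {σ | σ ∈ sigmaSet q ∧ σ ≠ τ ∧ σ * τ = τ * σ}

/-- `Ĉ_τ`: the normalized Paulis commuting with `τ`. -/
def CHatSet {q : ℕ} (τ : Mat q) : Set (Mat q) :=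
  {σ | σ ∈ sigmaHat q ∧ σ * τ = τ * σ}

/-- The normalized product `σ·τ = √d στ`. -/
def nprod {q : ℕ} (σ τ : Mat q) : Mat q := sqrtd q • (σ * τ)

/-- The Clifford normalizer `𝒩_q`: unitaries mapping normalized Paulis to
signed normalized Paulis under conjugation. -/
def Cliff (q : ℕ) : Set (Mat q) :=
  {U | U ∈ Matrix.unitaryGroup (Idx q) ℂ ∧
    ∀ σ ∈ sigmaHat q, ∃ τ ∈ sigmaHat q, U * σ * Uᴴ = τ ∨ U * σ * Uᴴ = -τ}

/-- The two-copy representation `φ⊗²(U) : A ⊗ B ↦ (UAU†) ⊗ (UBU†)`, extended linearly. -/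
def twoCopy {q : ℕ} (U : Mat q) : BMat q →ₗ[ℂ] BMat q where
  toFun M := (U ⊗ₖ U) * M * (U ⊗ₖ U)ᴴ
  map_add' M N := by
    show (U ⊗ₖ U) * (M + N) * (U ⊗ₖ U)ᴴ = (U ⊗ₖ U) * M * (U ⊗ₖ U)ᴴ + (U ⊗ₖ U) * N * (U ⊗ₖ U)ᴴ
    rw [Matrix.mul_add, Matrix.add_mul]
  map_smul' c M := by
    show (U ⊗ₖ U) * (c • M) * (U ⊗ₖ U)ᴴ = c • ((U ⊗ₖ U) * M * (U ⊗ₖ U)ᴴ)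
    rw [Matrix.mul_smul, Matrix.smul_mul]

/-- The Hilbert–Schmidt inner product `⟨A, B⟩ = tr(A† B)`. -/
def hs {q : ℕ} (A B : BMat q) : ℂ := (Aᴴ * B).trace

/-- A subspace is invariant under the two-copy representation of `𝒩_q`. -/
def IsInvariant (q : ℕ) (W : Submodule ℂ (BMat q)) : Prop :=
  ∀ U ∈ Cliff q, ∀ v ∈ W, twoCopy U v ∈ W

/-- A nonzero invariant subspace carries an irreducible subrepresentation. -/
def CarriesIrred (q : ℕ) (W : Submodule ℂ (BMat q)) : Prop :=
  W ≠ ⊥ ∧ IsInvariant q W ∧ ∀ W' ≤ W, IsInvariant q W' → W' = ⊥ ∨ W' = W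

/-- Two invariant subspaces carry equivalent subrepresentations: there is a linear
isomorphism between them intertwining the two-copy representation. -/
def EquivRep (q : ℕ) (W W' : Submodule ℂ (BMat q)) : Prop :=
  ∃ T : BMat q →ₗ[ℂ] BMat q, Submodule.map T W = W' ∧
    (∀ x ∈ W, T x = 0 → x = 0) ∧
    ∀ U ∈ Cliff q, ∀ x ∈ W, T (twoCopy U x) = twoCopy U (T x)

/-- `S_{σ,τ} = (σ⊗τ + τ⊗σ)/√2`. -/
def SVec {q : ℕ} (σ τ : Mat q) : BMat q :=
  ((Real.sqrt 2 : ℂ))⁻¹ • (σ ⊗ₖ τ + τ ⊗ₖ σ)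

/-- `A_{σ,τ} = (σ⊗τ − τ⊗σ)/√2`. -/
def AVec {q : ℕ} (σ τ : Mat q) : BMat q :=
  ((Real.sqrt 2 : ℂ))⁻¹ • (σ ⊗ₖ τ - τ ⊗ₖ σ)

/-- The trivial sector `V_id`. -/
def Vid (q : ℕ) : Submodule ℂ (BMat q) :=
  Submodule.span ℂ {sigma0 q ⊗ₖ sigma0 q}

/-- The right adjoint sector `V_r`. -/
def Vr (q : ℕ) : Submodule ℂ (BMat q) :=
  Submodule.span ℂ {M | ∃ τ ∈ sigmaSet q, M = sigma0 q ⊗ₖ τ}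

/-- The left adjoint sector `V_l`. -/
def Vl (q : ℕ) : Submodule ℂ (BMat q) :=
  Submodule.span ℂ {M | ∃ τ ∈ sigmaSet q, M = τ ⊗ₖ sigma0 q}

/-- The diagonal sector `V_d`. -/
def Vdiag (q : ℕ) : Submodule ℂ (BMat q) :=
  Submodule.span ℂ {M | ∃ τ ∈ sigmaSet q, M = τ ⊗ₖ τ}

/-- The symmetric commuting sector `V_[S]`. -/
def VScom (q : ℕ) : Submodule ℂ (BMat q) :=
  Submodule.span ℂ {M | ∃ τ ∈ sigmaSet q, ∃ σ ∈ CSet τ, M = SVec σ τ}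

/-- The symmetric anti-commuting sector `V_{S}`. -/
def VSanti (q : ℕ) : Submodule ℂ (BMat q) :=
  Submodule.span ℂ {M | ∃ τ ∈ sigmaSet q, ∃ σ ∈ NSet τ, M = SVec σ τ}

/-- The antisymmetric commuting sector `V_[A]`. -/
def VAcom (q : ℕ) : Submodule ℂ (BMat q) :=
  Submodule.span ℂ {M | ∃ τ ∈ sigmaSet q, ∃ σ ∈ CSet τ, M = AVec σ τ}

/-- The antisymmetric anti-commuting sector `V_{A}`. -/
def VAanti (q : ℕ) : Submodule ℂ (BMat q) :=
  Submodule.span ℂ {M | ∃ τ ∈ sigmaSet q, ∃ σ ∈ NSet τ, M = AVec σ τ}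

/-- `V_[A]` presented with the spanning vectors `A_{σ,σ·τ}`, `σ ∈ C_τ`. -/
def VAcom' (q : ℕ) : Submodule ℂ (BMat q) :=
  Submodule.span ℂ {M | ∃ τ ∈ sigmaSet q, ∃ σ ∈ CSet τ, M = AVec σ (nprod σ τ)}

/-- `V_0 = span{Σ_{σ∈σ_q} σ⊗σ}`. -/
def V0diag (q : ℕ) : Submodule ℂ (BMat q) :=
  Submodule.span ℂ {∑ᶠ σ ∈ sigmaSet q, σ ⊗ₖ σ}

/-- `V_1`, the "positive" part of the diagonal sector. -/
def V1diag (q : ℕ) : Submodule ℂ (BMat q) :=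
  Submodule.span ℂ {v | ∃ lam : Mat q → ℂ,
    v = ∑ᶠ σ ∈ sigmaSet q, lam σ • (σ ⊗ₖ σ) ∧
    (∑ᶠ σ ∈ sigmaSet q, lam σ) = 0 ∧
    ∀ τ ∈ sigmaSet q, (∑ᶠ σ ∈ NSet τ, lam σ) = -((2 ^ q : ℂ) / 2) * lam τ}

/-- `V_2`, the "negative" part of the diagonal sector. -/
def V2diag (q : ℕ) : Submodule ℂ (BMat q) :=
  Submodule.span ℂ {v | ∃ lam : Mat q → ℂ,
    v = ∑ᶠ σ ∈ sigmaSet q, lam σ • (σ ⊗ₖ σ) ∧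
    (∑ᶠ σ ∈ sigmaSet q, lam σ) = 0 ∧
    ∀ τ ∈ sigmaSet q, (∑ᶠ σ ∈ NSet τ, lam σ) = ((2 ^ q : ℂ) / 2) * lam τ}

/-- `v^[adj]_τ = (2|C_τ|)^{-1/2} Σ_{σ∈C_τ} S_{σ,σ·τ}`. -/
def vadjS {q : ℕ} (τ : Mat q) : BMat q :=
  ((Real.sqrt (2 * ((CSet τ).ncard : ℝ)) : ℂ))⁻¹ • ∑ᶠ σ ∈ CSet τ, SVec σ (nprod σ τ)

/-- `v^{adj}_τ = (2|N_τ|)^{-1/2} Σ_{σ∈N_τ} A_{σ,iσ·τ}`. -/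
def vadjA {q : ℕ} (τ : Mat q) : BMat q :=
  ((Real.sqrt (2 * ((NSet τ).ncard : ℝ)) : ℂ))⁻¹ •
    ∑ᶠ σ ∈ NSet τ, AVec σ (Complex.I • nprod σ τ)

/-- The symmetric adjoint sector `V_[adj]`. -/
def VadjS (q : ℕ) : Submodule ℂ (BMat q) :=
  Submodule.span ℂ {M | ∃ τ ∈ sigmaSet q, M = vadjS τ}

/-- The antisymmetric adjoint sector `V_{adj}`. -/
def VadjA (q : ℕ) : Submodule ℂ (BMat q) :=
  Submodule.span ℂ {M | ∃ τ ∈ sigmaSet q, M = vadjA τ}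

/-- The orthogonal complement `V^⊥_{adj}` of `V_{adj}` inside `V_{A}`. -/
def VadjAperp (q : ℕ) : Submodule ℂ (BMat q) :=
  Submodule.span ℂ {v | v ∈ VAanti q ∧ ∀ w ∈ VadjA q, hs w v = 0}

/-- `V_{1}^τ`. -/
def V1symτ (q : ℕ) (τ : Mat q) : Submodule ℂ (BMat q) :=
  Submodule.span ℂ {v | ∃ lam : Mat q → ℂ,
    v = ∑ᶠ σ ∈ NSet τ, lam σ • SVec σ (Complex.I • nprod σ τ) ∧
    ∀ ν ∈ NSet τ, (∑ᶠ σ ∈ NSet τ ∩ CSet ν, lam σ) - (∑ᶠ σ ∈ NSet τ ∩ NSet ν, lam σ)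
      = ((2 ^ q : ℂ) / 2) * lam ν}

/-- `V_{2}^τ`. -/
def V2symτ (q : ℕ) (τ : Mat q) : Submodule ℂ (BMat q) :=
  Submodule.span ℂ {v | ∃ lam : Mat q → ℂ,
    v = ∑ᶠ σ ∈ NSet τ, lam σ • SVec σ (Complex.I • nprod σ τ) ∧
    ∀ ν ∈ NSet τ, (∑ᶠ σ ∈ NSet τ ∩ CSet ν, lam σ) - (∑ᶠ σ ∈ NSet τ ∩ NSet ν, lam σ)
      = -((2 ^ q : ℂ) / 2) * lam ν}

/-- `V_{1} = ⊕_τ V_{1}^τ`. -/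
def V1sym (q : ℕ) : Submodule ℂ (BMat q) := ⨆ τ ∈ sigmaSet q, V1symτ q τ

/-- `V_{2} = ⊕_τ V_{2}^τ`. -/
def V2sym (q : ℕ) : Submodule ℂ (BMat q) := ⨆ τ ∈ sigmaSet q, V2symτ q τ

/-- The defining property of the map `Θ` on `V_[A]`. -/
def ThetaProp (q : ℕ) (Θ : BMat q →ₗ[ℂ] BMat q) : Prop :=
  ∀ τ ∈ sigmaSet q, ∀ σ ∈ CSet τ,
    Θ (AVec σ (nprod σ τ)) =
      (∑ᶠ σ' ∈ NSet τ ∩ CSet σ, AVec σ' (Complex.I • nprod σ' τ)) -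
      ∑ᶠ σ' ∈ NSet τ ∩ NSet σ, AVec σ' (Complex.I • nprod σ' τ)

/-- `V` = span of off-diagonal products `σ⊗σ̂`, `σ ≠ σ̂`. -/
def Voff (q : ℕ) : Submodule ℂ (BMat q) :=
  Submodule.span ℂ {M | ∃ σ ∈ sigmaSet q, ∃ σ' ∈ sigmaSet q, σ ≠ σ' ∧ M = σ ⊗ₖ σ'}

/-- `V^τ` = span of the `σ⊗σ̂` with `σ·σ̂ ∈ {τ, −τ, iτ, −iτ}`. -/
def Vtau (q : ℕ) (τ : Mat q) : Submodule ℂ (BMat q) :=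
  Submodule.span ℂ {M | ∃ σ ∈ sigmaSet q, ∃ σ' ∈ sigmaSet q,
    (nprod σ σ' = τ ∨ nprod σ σ' = -τ ∨ nprod σ σ' = Complex.I • τ ∨
      nprod σ σ' = -(Complex.I • τ)) ∧ M = σ ⊗ₖ σ'}


theorem pauli_tr (a b : Fin 4) :
    ∃ r : ℝ, 0 ≤ r ∧ (∑ x, ∑ y, pauli1 a x y * pauli1 b y x) = (r : ℂ) := by
  fin_cases a <;> fin_cases b <;>
    first
    | (refine ⟨0, le_rfl, ?_⟩; simp [pauli1, Fin.sum_univ_two]; done)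
    | (refine ⟨2, by norm_num, ?_⟩; simp [pauli1, Fin.sum_univ_two]; done)
    | (refine ⟨2, by norm_num, ?_⟩; simp [pauli1, Fin.sum_univ_two]; norm_num; done)

theorem pauli_tr_self (a : Fin 4) :
    (∑ x, ∑ y, pauli1 a x y * pauli1 a y x) = 2 := by
  fin_cases a <;> simp [pauli1, Fin.sum_univ_two, Matrix.one_apply] <;> norm_num

theorem trace_pauli {q : ℕ} (a b : Fin q → Fin 4) :
    (PauliOp a * PauliOp b).trace =
      ∏ i, ∑ x, ∑ y, pauli1 (a i) x y * pauli1 (b i) y x := by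
  simp only [Matrix.trace, Matrix.diag, Matrix.mul_apply, PauliOp, Matrix.of_apply,
    ← Finset.prod_mul_distrib, Finset.prod_univ_sum, Fintype.piFinset_univ]

theorem pauli_ne_neg {q : ℕ} (a b : Fin q → Fin 4) : PauliOp a ≠ -PauliOp b := by
  intro h
  choose r hr hr' using fun i => pauli_tr (a i) (b i)
  have h1 := trace_pauli a b
  rw [Finset.prod_congr rfl (fun i _ => hr' i), h, Matrix.neg_mul, Matrix.trace_neg,
    trace_pauli b b, Finset.prod_congr rfl (fun i _ => pauli_tr_self (b i))] at h1
  have h2 : 0 ≤ ∏ i, r i := Finset.prod_nonneg fun i _ => hr i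
  have h3 : -(2:ℝ)^q = ∏ i, r i := by
    simp only [Finset.prod_const, Finset.card_univ, Fintype.card_fin] at h1
    exact_mod_cast h1
  have : (0:ℝ) < 2^q := by positivity
  linarith

theorem sqrtd_ne (q : ℕ) : sqrtd q ≠ 0 := by
  unfold sqrtd
  have : (0:ℝ) < Real.sqrt (2^q) := Real.sqrt_pos.2 (by positivity)
  exact_mod_cast this.ne'

theorem hat_ne_neg {q : ℕ} {σ τ : Mat q} (hσ : σ ∈ sigmaHat q) (hτ : τ ∈ sigmaHat q) :
    σ ≠ -τ := by
  obtain ⟨a, rfl⟩ := hσ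
  obtain ⟨b, rfl⟩ := hτ
  intro h
  rw [← smul_neg] at h
  exact pauli_ne_neg a b (smul_right_injective _ (inv_ne_zero (sqrtd_ne q)) h)

theorem sigma0_mem (q : ℕ) : sigma0 q ∈ sigmaHat q := by
  refine ⟨fun _ => 0, ?_⟩
  unfold sigma0
  congr 1
  ext x y
  simp only [PauliOp, Matrix.of_apply, pauli1, Matrix.cons_val_zero, Matrix.one_apply]
  rw [Finset.prod_ite_zero]
  simp [funext_iff]

theorem conj_inj {q : ℕ} {U A B : Mat q} (h : Uᴴ * U = 1) (hAB : U * A * Uᴴ = U * B * Uᴴ) :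
    A = B := by
  have key : ∀ C : Mat q, Uᴴ * (U * C * Uᴴ) * U = C := fun C => by
    calc Uᴴ * (U * C * Uᴴ) * U = (Uᴴ * U) * C * (Uᴴ * U) := by simp only [Matrix.mul_assoc]
      _ = C := by rw [h, Matrix.one_mul, Matrix.mul_one]
  rw [← key A, hAB, key]

theorem conj_mul {q : ℕ} {U : Mat q} (A B : Mat q) (h : Uᴴ * U = 1) :
    (U * A * Uᴴ) * (U * B * Uᴴ) = U * (A * B) * Uᴴ := by
  calc (U * A * Uᴴ) * (U * B * Uᴴ) = U * A * (Uᴴ * U) * B * Uᴴ := by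
        simp only [Matrix.mul_assoc]
    _ = _ := by rw [h]; simp only [Matrix.mul_assoc, Matrix.one_mul]

theorem cliff_unit {q : ℕ} {U : Mat q} (hU : U ∈ Cliff q) : Uᴴ * U = 1 ∧ U * Uᴴ = 1 :=
  ⟨Matrix.mem_unitaryGroup_iff'.1 hU.1, Matrix.mem_unitaryGroup_iff.1 hU.1⟩

theorem conj_sigma0 {q : ℕ} {U : Mat q} (hU : U ∈ Cliff q) :
    U * sigma0 q * Uᴴ = sigma0 q := by
  simp [sigma0, (cliff_unit hU).2]

theorem conj_sigma {q : ℕ} {U σ : Mat q} (hU : U ∈ Cliff q) (hσ : σ ∈ sigmaSet q) :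
    ∃ s : ℂ, s * s = 1 ∧ s • (U * σ * Uᴴ) ∈ sigmaSet q := by
  have hu := (cliff_unit hU).1
  obtain ⟨τ, hτ, h | h⟩ := hU.2 σ hσ.1
  · refine ⟨1, by norm_num, ?_⟩
    rw [one_smul]
    refine ⟨h ▸ hτ, fun h0 => hσ.2 ?_⟩
    rw [Set.mem_singleton_iff, ← conj_sigma0 hU] at h0
    exact conj_inj hu h0
  · refine ⟨-1, by norm_num, ?_⟩
    rw [neg_smul, one_smul]
    refine ⟨by rw [h, neg_neg]; exact hτ, fun h0 => ?_⟩
    rw [Set.mem_singleton_iff, ← conj_sigma0 hU, neg_eq_iff_eq_neg, ← Matrix.neg_mul,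
      ← Matrix.mul_neg] at h0
    exact hat_ne_neg hσ.1 (sigma0_mem q) (conj_inj hu h0)

theorem conj_NSet {q : ℕ} {U σ τ : Mat q} (hU : U ∈ Cliff q) (hσ : σ ∈ NSet τ) {s t : ℂ}
    (h : s • (U * σ * Uᴴ) ∈ sigmaSet q) :
    s • (U * σ * Uᴴ) ∈ NSet (t • (U * τ * Uᴴ)) := by
  have hu := (cliff_unit hU).1
  refine ⟨h, ?_⟩
  rw [smul_mul_smul_comm, smul_mul_smul_comm, conj_mul _ _ hu, conj_mul _ _ hu, mul_comm t s,
    ← smul_add, ← Matrix.add_mul, ← Matrix.mul_add, hσ.2]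
  simp

theorem conj_CSet {q : ℕ} {U σ τ : Mat q} (hU : U ∈ Cliff q) (hσ : σ ∈ CSet τ)
    (hτ : τ ∈ sigmaSet q) {s t : ℂ} (hs : s * s = 1) (ht : t * t = 1)
    (h : s • (U * σ * Uᴴ) ∈ sigmaSet q) :
    s • (U * σ * Uᴴ) ∈ CSet (t • (U * τ * Uᴴ)) := by
  have hu := (cliff_unit hU).1
  refine ⟨h, fun he => ?_, ?_⟩
  · have h1 : U * σ * Uᴴ = U * ((s * t) • τ) * Uᴴ := by
      have := congrArg (fun M => s • M) he
      simp only [smul_smul, hs, one_smul] at this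
      rw [this]; simp
    have h2 := conj_inj hu h1
    have h3 : (s * t) * (s * t) = 1 := by linear_combination hs * t * t + ht
    rcases mul_self_eq_one_iff.1 h3 with h4 | h4
    · exact hσ.2.1 (by rw [h2, h4, one_smul])
    · exact hat_ne_neg hσ.1.1 hτ.1 (by rw [h2, h4, neg_smul, one_smul])
  · rw [smul_mul_smul_comm, smul_mul_smul_comm, conj_mul _ _ hu, conj_mul _ _ hu, mul_comm t s,
      hσ.2.2]

theorem twoCopy_kron {q : ℕ} (U A B : Mat q) :
    twoCopy U (A ⊗ₖ B) = (U * A * Uᴴ) ⊗ₖ (U * B * Uᴴ) := by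
  show (U ⊗ₖ U) * (A ⊗ₖ B) * (U ⊗ₖ U)ᴴ = _
  rw [Matrix.conjTranspose_kronecker, ← Matrix.mul_kronecker_mul, ← Matrix.mul_kronecker_mul]

theorem twoCopy_kron' {q : ℕ} (U A B : Mat q) {s t : ℂ} (hs : s * s = 1) (ht : t * t = 1) :
    twoCopy U (A ⊗ₖ B) = (s * t) • ((s • (U * A * Uᴴ)) ⊗ₖ (t • (U * B * Uᴴ))) := by
  have h3 : (s * t) * (s * t) = 1 := by linear_combination hs * t * t + ht
  rw [twoCopy_kron, Matrix.smul_kronecker, Matrix.kronecker_smul, smul_smul, smul_smul,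
    mul_assoc (s * t) s t, h3, one_smul]

theorem twoCopy_S {q : ℕ} (U A B : Mat q) {s t : ℂ} (hs : s * s = 1) (ht : t * t = 1) :
    twoCopy U (SVec A B) = (s * t) • SVec (s • (U * A * Uᴴ)) (t • (U * B * Uᴴ)) := by
  unfold SVec
  rw [map_smul, map_add, twoCopy_kron' U A B hs ht, twoCopy_kron' U B A ht hs, mul_comm t s,
    ← smul_add, smul_comm]

theorem twoCopy_A {q : ℕ} (U A B : Mat q) {s t : ℂ} (hs : s * s = 1) (ht : t * t = 1) :
    twoCopy U (AVec A B) = (s * t) • AVec (s • (U * A * Uᴴ)) (t • (U * B * Uᴴ)) := by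
  unfold AVec
  rw [map_smul, map_sub, twoCopy_kron' U A B hs ht, twoCopy_kron' U B A ht hs, mul_comm t s,
    ← smul_sub, smul_comm]

theorem inv_span {q : ℕ} (G : Set (BMat q))
    (h : ∀ U ∈ Cliff q, ∀ g ∈ G, ∃ c : ℂ, ∃ g' ∈ G, twoCopy U g = c • g') :
    IsInvariant q (Submodule.span ℂ G) := by
  intro U hU v hv
  have : Submodule.span ℂ G ≤ (Submodule.span ℂ G).comap (twoCopy U) := by
    rw [Submodule.span_le]
    intro g hg
    obtain ⟨c, g', hg', e⟩ := h U hU g hg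
    show twoCopy U g ∈ Submodule.span ℂ G
    rw [e]
    exact Submodule.smul_mem _ _ (Submodule.subset_span hg')
  exact this hv

/-- Lemma 3: the eight sectors are invariant under the
two-copy representation. -/
theorem statement2 (q : ℕ) (hq : 1 ≤ q) :
    IsInvariant q (Vid q) ∧ IsInvariant q (Vr q) ∧ IsInvariant q (Vl q) ∧
    IsInvariant q (Vdiag q) ∧ IsInvariant q (VScom q) ∧ IsInvariant q (VSanti q) ∧
    IsInvariant q (VAcom q) ∧ IsInvariant q (VAanti q) := by
  have one1 : (1:ℂ) * 1 = 1 := one_mul 1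
  refine ⟨inv_span _ ?_, inv_span _ ?_, inv_span _ ?_, inv_span _ ?_, inv_span _ ?_,
    inv_span _ ?_, inv_span _ ?_, inv_span _ ?_⟩
  · rintro U hU g rfl
    exact ⟨1, _, rfl, by rw [twoCopy_kron, conj_sigma0 hU, one_smul]⟩
  · rintro U hU g ⟨τ, hτ, rfl⟩
    obtain ⟨t, ht, h⟩ := conj_sigma hU hτ
    refine ⟨1 * t, _, ⟨_, h, rfl⟩, ?_⟩
    rw [twoCopy_kron' U _ _ one1 ht, conj_sigma0 hU, one_smul]
  · rintro U hU g ⟨τ, hτ, rfl⟩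
    obtain ⟨t, ht, h⟩ := conj_sigma hU hτ
    refine ⟨t * 1, _, ⟨_, h, rfl⟩, ?_⟩
    rw [twoCopy_kron' U _ _ ht one1, conj_sigma0 hU, one_smul]
  · rintro U hU g ⟨τ, hτ, rfl⟩
    obtain ⟨t, ht, h⟩ := conj_sigma hU hτ
    exact ⟨_, _, ⟨_, h, rfl⟩, twoCopy_kron' U _ _ ht ht⟩
  · rintro U hU g ⟨τ, hτ, σ, hσ, rfl⟩
    obtain ⟨t, ht, h⟩ := conj_sigma hU hτ
    obtain ⟨s, hs, h'⟩ := conj_sigma hU hσ.1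
    exact ⟨_, _, ⟨_, h, _, conj_CSet hU hσ hτ hs ht h', rfl⟩, twoCopy_S U _ _ hs ht⟩
  · rintro U hU g ⟨τ, hτ, σ, hσ, rfl⟩
    obtain ⟨t, ht, h⟩ := conj_sigma hU hτ
    obtain ⟨s, hs, h'⟩ := conj_sigma hU hσ.1
    exact ⟨_, _, ⟨_, h, _, conj_NSet hU hσ h', rfl⟩, twoCopy_S U _ _ hs ht⟩
  · rintro U hU g ⟨τ, hτ, σ, hσ, rfl⟩
    obtain ⟨t, ht, h⟩ := conj_sigma hU hτ
    obtain ⟨s, hs, h'⟩ := conj_sigma hU hσ.1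
    exact ⟨_, _, ⟨_, h, _, conj_CSet hU hσ hτ hs ht h', rfl⟩, twoCopy_A U _ _ hs ht⟩
  · rintro U hU g ⟨τ, hτ, σ, hσ, rfl⟩
    obtain ⟨t, ht, h⟩ := conj_sigma hU hτ
    obtain ⟨s, hs, h'⟩ := conj_sigma hU hσ.1
    exact ⟨_, _, ⟨_, h, _, conj_NSet hU hσ h', rfl⟩, twoCopy_A U _ _ hs ht⟩

end CliffordPaper
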